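/- Let τ and σ be operator means on P with σ strictly monotone in its second variable, let A, B ∈ P, and let X₀ ∈ P satisfy X₀ = (X₀σA)τ(X₀σB). If Y ∈ P satisfies (YσA)τ(YσB) ≤ Y, then X₀ ≤ Y. -/

import Mathlib

/-!
The proof compares `X₀` with the multiples of `Y`. Since `Y` is positive and invertible, the set
of `t ≥ 1` with `X₀ ≤ tY` is nonempty, and it is closed, so it has a least element `t`. Suppose
`t > 1`. By monotonicity and homogeneity,
`X₀ ≤ (tYσA)τ(tYσB) = t ((Yσt⁻¹A)τ(Yσt⁻¹B))`.
Strict monotonicity gives `Yσt⁻¹A < YσA` and `Yσt⁻¹B < YσB`, and a strict inequality in `P` leaves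
room for a factor: both left-hand sides are at most `c` times the right-hand sides for some
`c ∈ (0, 1)` (`PosInv.exists_le_smul_of_lt`). Hence `X₀ ≤ tc ((YσA)τ(YσB)) ≤ tcY`
(`exists_contraction`), which contradicts the minimality of `t`. Thus `t = 1`.
-/

open scoped ComplexOrder

variable {H : Type*} [NormedAddCommGroup H] [InnerProductSpace ℂ H] [CompleteSpace H]

/-- Membership in `P`, the cone of positive invertible bounded linear operators on `H`. -/
def PosInv (A : H →L[ℂ] H) : Prop := A.IsPositive ∧ IsUnit A

/-- The Loewner order: `A ≤ B` iff `B - A` is positive. -/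
def Loe (A B : H →L[ℂ] H) : Prop := (B - A).IsPositive

/-- The strict order `A < B`, meaning `B - A ∈ P`. -/
def LoeLT (A B : H →L[ℂ] H) : Prop := PosInv (B - A)

/-- `A^{1/2}` via the continuous functional calculus. -/
noncomputable def opSqrt (A : H →L[ℂ] H) : H →L[ℂ] H := cfc Real.sqrt A

/-- `A^{-1/2}` via the continuous functional calculus. -/
noncomputable def opInvSqrt (A : H →L[ℂ] H) : H →L[ℂ] H :=
  cfc (fun x : ℝ => (Real.sqrt x)⁻¹) A

/-- The Thompson metric `d_T(A,B) = ‖log (A^{-1/2} B A^{-1/2})‖`. -/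
noncomputable def dT (A B : H →L[ℂ] H) : ℝ :=
  ‖cfc Real.log (opInvSqrt A * B * opInvSqrt A)‖

/-- The mean induced by a function `f`: `A σ_f B = A^{1/2} f(A^{-1/2} B A^{-1/2}) A^{1/2}`. -/
noncomputable def indMean (f : ℝ → ℝ) (A B : H →L[ℂ] H) : H →L[ℂ] H :=
  opSqrt A * cfc f (opInvSqrt A * B * opInvSqrt A) * opSqrt A

/-- Convergence in the strong operator topology. -/
def SConv (A : ℕ → H →L[ℂ] H) (A0 : H →L[ℂ] H) : Prop :=
  ∀ x : H, Filter.Tendsto (fun k => A k x) Filter.atTop (nhds (A0 x))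

/-- A Kubo–Ando operator mean on `P`: a binary operation satisfying (I) joint
monotonicity, (II) the transformer equality (together with positive homogeneity),
(III) downward continuity along nonincreasing strongly convergent sequences, and
(IV) normalization. -/
structure IsOperatorMean (m : (H →L[ℂ] H) → (H →L[ℂ] H) → (H →L[ℂ] H)) : Prop where
  maps_P : ∀ A B, PosInv A → PosInv B → PosInv (m A B)
  mono : ∀ A A' B B', PosInv A → PosInv A' → PosInv B → PosInv B' →
    Loe A A' → Loe B B' → Loe (m A B) (m A' B')
  transformer : ∀ A B C, PosInv A → PosInv B → PosInv C →
    C * m A B * C = m (C * A * C) (C * B * C)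
  homog : ∀ A B, PosInv A → PosInv B → ∀ r : ℝ, 0 < r → m (r • A) (r • B) = r • m A B
  downCont : ∀ (A B : ℕ → H →L[ℂ] H) (A0 B0 : H →L[ℂ] H),
    (∀ k, PosInv (A k)) → (∀ k, PosInv (B k)) → PosInv A0 → PosInv B0 →
    (∀ k, Loe (A (k + 1)) (A k)) → (∀ k, Loe (B (k + 1)) (B k)) →
    SConv A A0 → SConv B B0 →
    (∀ k, Loe (m (A (k + 1)) (B (k + 1))) (m (A k) (B k))) ∧
      SConv (fun k => m (A k) (B k)) (m A0 B0)
  norm_one : m 1 1 = 1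

/-- `σ` is strictly monotone in its second variable: `X ∈ P` and `A < B` imply `XσA < XσB`. -/
def StrictSecond (m : (H →L[ℂ] H) → (H →L[ℂ] H) → (H →L[ℂ] H)) : Prop :=
  ∀ X A B, PosInv X → PosInv A → PosInv B → LoeLT A B → LoeLT (m X A) (m X B)

theorem loe_iff_le (A B : H →L[ℂ] H) : Loe A B ↔ A ≤ B :=
  (ContinuousLinearMap.le_def A B).symm

theorem PosInv.nonneg {A : H →L[ℂ] H} (hA : PosInv A) : 0 ≤ A :=
  (ContinuousLinearMap.nonneg_iff_isPositive A).2 hA.1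

theorem PosInv.smul {A : H →L[ℂ] H} (hA : PosInv A) {r : ℝ} (hr : 0 < r) : PosInv (r • A) := by
  refine ⟨(ContinuousLinearMap.nonneg_iff_isPositive _).1 (smul_nonneg hr.le hA.nonneg), ?_⟩
  exact hA.2.smul (Units.mk0 r hr.ne')

/-- An element of `P` is bounded below by a positive multiple of `1`, hence it dominates a small
positive multiple of any positive operator. -/
theorem PosInv.exists_smul_le {P X : H →L[ℂ] H} (hP : PosInv P) (hX : 0 ≤ X) :
    ∃ ε : ℝ, 0 < ε ∧ ε • X ≤ P := by
  rcases subsingleton_or_nontrivial (H →L[ℂ] H) with hs | hn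
  · exact ⟨1, one_pos, (Subsingleton.elim _ _).le⟩
  have hsp : IsStrictlyPositive P := ⟨hP.nonneg, hP.2⟩
  obtain ⟨r, hr, hrP⟩ : ∃ r > 0, algebraMap ℝ (H →L[ℂ] H) r ≤ P :=
    (CFC.exists_pos_algebraMap_le_iff hsp.isSelfAdjoint).2 fun x hx => hsp.spectrum_pos hx
  have hXn : X ≤ algebraMap ℝ (H →L[ℂ] H) ‖X‖ :=
    (IsSelfAdjoint.of_nonneg hX).le_algebraMap_norm_self
  have hpos : 0 < ‖X‖ + 1 := by positivity
  refine ⟨r / (‖X‖ + 1), by positivity, ?_⟩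
  calc (r / (‖X‖ + 1)) • X ≤ (r / (‖X‖ + 1)) • algebraMap ℝ (H →L[ℂ] H) ‖X‖ :=
        smul_le_smul_of_nonneg_left hXn (by positivity)
    _ = (r / (‖X‖ + 1) * ‖X‖) • (1 : H →L[ℂ] H) := by
        rw [Algebra.algebraMap_eq_smul_one, smul_smul]
    _ ≤ r • (1 : H →L[ℂ] H) := by
        refine smul_le_smul_of_nonneg_right ?_ zero_le_one
        rw [div_mul_eq_mul_div, div_le_iff₀ hpos]
        nlinarith
    _ ≤ P := by rwa [← Algebra.algebraMap_eq_smul_one]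

/-- A strict inequality `U < V` improves to `U ≤ cV` for every `c < 1` close enough to `1`. -/
theorem PosInv.exists_le_smul_of_lt {U V : H →L[ℂ] H} (hV : PosInv V) (h : LoeLT U V) :
    ∃ c₀ : ℝ, c₀ < 1 ∧ ∀ c : ℝ, c₀ ≤ c → U ≤ c • V := by
  obtain ⟨ε, hε, hle⟩ := PosInv.exists_smul_le h hV.nonneg
  refine ⟨1 - ε, by linarith, fun c hc => ?_⟩
  calc U ≤ V - ε • V := by rwa [le_sub_comm]
    _ = (1 - ε) • V := by rw [sub_smul, one_smul]
    _ ≤ c • V := smul_le_smul_of_nonneg_right hc hV.nonneg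

theorem PosInv.inv_smul_lt {A : H →L[ℂ] H} (hA : PosInv A) {t : ℝ} (ht : 1 < t) :
    LoeLT (t⁻¹ • A) A := by
  have h : A - t⁻¹ • A = (1 - t⁻¹) • A := by rw [sub_smul, one_smul]
  rw [LoeLT, h]
  exact hA.smul (sub_pos.2 (inv_lt_one_of_one_lt₀ ht))

/-- Pulling `t > 0` out of the first variable of a mean: `(tY)σA = t(Yσt⁻¹A)`. -/
theorem IsOperatorMean.smul_left {σ : (H →L[ℂ] H) → (H →L[ℂ] H) → (H →L[ℂ] H)}
    (hσ : IsOperatorMean σ) {Y A : H →L[ℂ] H} (hY : PosInv Y) (hA : PosInv A) {t : ℝ}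
    (ht : 0 < t) : σ (t • Y) A = t • σ Y (t⁻¹ • A) := by
  rw [← hσ.homog _ _ hY (hA.smul (inv_pos.2 ht)) t ht, smul_inv_smul₀ ht.ne']

/-- For a supersolution `Y` and `t > 1`, the map `X ↦ (XσA)τ(XσB)` sends everything below `tY`
below `tcY` for some `c < 1`; stated here for a fixed point `X₀`. -/
theorem exists_contraction
    {τ σ : (H →L[ℂ] H) → (H →L[ℂ] H) → (H →L[ℂ] H)}
    (hτ : IsOperatorMean τ) (hσ : IsOperatorMean σ) (hσstrict : StrictSecond σ)
    {A B X₀ Y : H →L[ℂ] H} (hA : PosInv A) (hB : PosInv B) (hX₀ : PosInv X₀)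
    (hfix : X₀ = τ (σ X₀ A) (σ X₀ B)) (hY : PosInv Y) (hsuper : τ (σ Y A) (σ Y B) ≤ Y)
    {t : ℝ} (ht : 1 < t) (hle : X₀ ≤ t • Y) :
    ∃ c : ℝ, 0 < c ∧ c < 1 ∧ X₀ ≤ (t * c) • Y := by
  have ht0 : 0 < t := one_pos.trans ht
  have key : ∀ D : H →L[ℂ] H, PosInv D →
      ∃ c₀ : ℝ, c₀ < 1 ∧ ∀ c : ℝ, c₀ ≤ c → σ X₀ D ≤ (t * c) • σ Y D := by
    intro D hD
    have hD' := hD.smul (inv_pos.2 ht0)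
    obtain ⟨c₀, hc₀, h⟩ := (hσ.maps_P Y D hY hD).exists_le_smul_of_lt
      (hσstrict Y _ _ hY hD' hD (hD.inv_smul_lt ht))
    refine ⟨c₀, hc₀, fun c hc => ?_⟩
    calc σ X₀ D ≤ σ (t • Y) D := (loe_iff_le _ _).1 <|
          hσ.mono _ _ _ _ hX₀ (hY.smul ht0) hD hD ((loe_iff_le _ _).2 hle)
            ((loe_iff_le _ _).2 le_rfl)
      _ = t • σ Y (t⁻¹ • D) := hσ.smul_left hY hD ht0
      _ ≤ t • c • σ Y D := smul_le_smul_of_nonneg_left (h c hc) ht0.le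
      _ = (t * c) • σ Y D := smul_smul _ _ _
  obtain ⟨a, ha, hAc⟩ := key A hA
  obtain ⟨b, hb, hBc⟩ := key B hB
  -- a single factor serving both variables of `τ`, kept positive so that homogeneity applies
  obtain ⟨c, hc, hc1⟩ : ∃ c, max (max a b) 0 < c ∧ c < 1 :=
    exists_between (max_lt (max_lt ha hb) one_pos)
  have hc0 : 0 < c := (le_max_right _ _).trans_lt hc
  have hab : max a b ≤ c := (le_max_left _ _).trans hc.le
  have htc : 0 < t * c := mul_pos ht0 hc0
  have hYA := hσ.maps_P Y A hY hA
  have hYB := hσ.maps_P Y B hY hB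
  refine ⟨c, hc0, hc1, ?_⟩
  calc X₀ = τ (σ X₀ A) (σ X₀ B) := hfix
    _ ≤ τ ((t * c) • σ Y A) ((t * c) • σ Y B) := (loe_iff_le _ _).1 <|
        hτ.mono _ _ _ _ (hσ.maps_P _ _ hX₀ hA) (hYA.smul htc) (hσ.maps_P _ _ hX₀ hB)
          (hYB.smul htc) ((loe_iff_le _ _).2 (hAc c ((le_max_left _ _).trans hab)))
          ((loe_iff_le _ _).2 (hBc c ((le_max_right _ _).trans hab)))
    _ = (t * c) • τ (σ Y A) (σ Y B) := hτ.homog _ _ hYA hYB _ htc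
    _ ≤ (t * c) • Y := smul_le_smul_of_nonneg_left hsuper htc.le

/-- If `X₀ ∈ P` solves `X₀ = (X₀σA)τ(X₀σB)` and `Y ∈ P` satisfies
`(YσA)τ(YσB) ≤ Y`, then `X₀ ≤ Y`. -/
theorem fixed_point_le_supersolution
    (τ σ : (H →L[ℂ] H) → (H →L[ℂ] H) → (H →L[ℂ] H))
    (hτ : IsOperatorMean τ) (hσ : IsOperatorMean σ) (hσstrict : StrictSecond σ)
    (A B : H →L[ℂ] H) (hA : PosInv A) (hB : PosInv B)
    (X₀ : H →L[ℂ] H) (hX₀ : PosInv X₀) (hfix : X₀ = τ (σ X₀ A) (σ X₀ B))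
    (Y : H →L[ℂ] H) (hY : PosInv Y) (hsuper : Loe (τ (σ Y A) (σ Y B)) Y) :
    Loe X₀ Y := by
  rw [loe_iff_le] at hsuper ⊢
  let S : Set ℝ := {t | 1 ≤ t ∧ X₀ ≤ t • Y}
  have hne : S.Nonempty := by
    obtain ⟨ε, hε, h⟩ := hY.exists_smul_le hX₀.nonneg
    have hX : X₀ ≤ ε⁻¹ • Y := by
      simpa [inv_smul_smul₀ hε.ne'] using smul_le_smul_of_nonneg_left h (inv_pos.2 hε).le
    exact ⟨max 1 ε⁻¹, le_max_left _ _,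
      hX.trans (smul_le_smul_of_nonneg_right (le_max_right _ _) hY.nonneg)⟩
  have hbdd : BddBelow S := ⟨1, fun t ht => ht.1⟩
  have hclosed' : IsClosed {t : ℝ | X₀ ≤ t • Y} :=
    isClosed_le continuous_const (by fun_prop)
  have hclosed : IsClosed S := isClosed_Ici.inter hclosed'
  obtain ⟨ht1, htY⟩ : sInf S ∈ S := hclosed.csInf_mem hne hbdd
  rcases ht1.eq_or_lt with h1 | h1
  · rwa [← h1, one_smul] at htY
  exfalso
  obtain ⟨c, hc0, hc1, hc⟩ :=
    exists_contraction hτ hσ hσstrict hA hB hX₀ hfix hY hsuper h1 htY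
  have hmem : max 1 (sInf S * c) ∈ S :=
    ⟨le_max_left _ _, hc.trans (smul_le_smul_of_nonneg_right (le_max_right _ _) hY.nonneg)⟩
  have hlt : max 1 (sInf S * c) < sInf S :=
    max_lt h1 (mul_lt_of_lt_one_right (one_pos.trans h1) hc1)
  exact (csInf_le hbdd hmem).not_gt hlt
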